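/- Let a ≥ b > 0 and let N ∈ ℕ with N ≥ 4. Then M(L(N)) = N − 1 and there exists ε > 0 such that M(ℓ) = N for every ℓ with L(N) < ℓ ≤ L(N) + ε. Conversely, if M is discontinuous at some ℓ > 0, then ℓ = L(N) for some integer N ≥ 4. -/

import Mathlib

open Set

/-- Interior of the tile `T(k,l)` of the `a×b` grid. -/
noncomputable def tileInt (a b : ℝ) (k l : ℤ) : Set (ℝ × ℝ) :=
  Set.Ioo ((k : ℝ) * a) (((k : ℝ) + 1) * a) ×ˢ Set.Ioo ((l : ℝ) * b) (((l : ℝ) + 1) * b)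

/-- Number of tiles of the `a×b` grid visited by the closed segment with endpoints `p`, `q`. -/
noncomputable def visitCount (a b : ℝ) (p q : ℝ × ℝ) : ℕ :=
  Set.ncard {kl : ℤ × ℤ | (segment ℝ p q ∩ tileInt a b kl.1 kl.2).Nonempty}

/-- Normalized width of the discrete bounding rectangle of the segment with endpoints `p`, `q`. -/
noncomputable def normWidth (a : ℝ) (p q : ℝ × ℝ) : ℤ :=
  ⌈max p.1 q.1 / a⌉ - ⌊min p.1 q.1 / a⌋

/-- Normalized height of the discrete bounding rectangle of the segment with endpoints `p`, `q`. -/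
noncomputable def normHeight (b : ℝ) (p q : ℝ × ℝ) : ℤ :=
  ⌈max p.2 q.2 / b⌉ - ⌊min p.2 q.2 / b⌋

/-- Euclidean length of the segment with endpoints `p`, `q`. -/
noncomputable def segLen (p q : ℝ × ℝ) : ℝ :=
  Real.sqrt ((p.1 - q.1) ^ 2 + (p.2 - q.2) ^ 2)

/-- `maxTiles a b ℓ` : maximum number of tiles of the `a×b` grid visited by a segment of length `ℓ`. -/
noncomputable def maxTiles (a b ℓ : ℝ) : ℕ :=
  sSup {n : ℕ | ∃ p q : ℝ × ℝ, segLen p q = ℓ ∧ visitCount a b p q = n}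

/-- `infLen a b N` : infimum of lengths of segments visiting at least `N` tiles of the `a×b` grid. -/
noncomputable def infLen (a b : ℝ) (N : ℕ) : ℝ :=
  sInf {ℓ : ℝ | 0 < ℓ ∧ ∃ p q : ℝ × ℝ, segLen p q = ℓ ∧ N ≤ visitCount a b p q}

/-- `minIntLen N` : minimum positive integer length of a segment visiting at least `N` tiles
of the unit square grid. -/
noncomputable def minIntLen (N : ℕ) : ℕ :=
  sInf {L : ℕ | 1 ≤ L ∧ ∃ p q : ℝ × ℝ, segLen p q = (L : ℝ) ∧ N ≤ visitCount 1 1 p q}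

/-!
The tiles visited by a segment form a chain in the bounding box of the segment, so that a segment
visiting `n + 3` tiles is longer than the diagonal of an `i * a` by `j * b` rectangle for some
`i + j = n`. Conversely, a segment with extents larger than `i * a` and `j * b` can be translated so
that it crosses `i + 1` vertical and `j + 1` horizontal grid lines at pairwise distinct points, and
it enters a new tile at each of them. Hence some segment of length `ℓ` visits at least `n + 3` tiles
if and only if `d n < ℓ`, where `d n` is the least diagonal of such a rectangle. In other words,
`L (n + 3) = d n`, and since `d` is strictly increasing with `d 0 = 0`, the function `M` takes the
value `n + 3` exactly on `(d n, d (n + 1)]`.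
-/

open AffineMap Filter Topology

section Chains

lemma isChain_segment {𝕜 E : Type*} [Ring 𝕜] [LinearOrder 𝕜] [AddRightMono 𝕜] [AddCommGroup E]
    [Preorder E] [AddRightMono E] [Module 𝕜 E] [SMulPosMono 𝕜 E] {p q : E} (hpq : p ≤ q) :
    IsChain (· ≤ ·) (segment 𝕜 p q) := by
  rw [segment_eq_image_lineMap]
  exact (lineMap_mono hpq).isChain_range.mono (image_subset_range _ _)

lemma ncard_le_of_isChain_of_subset_Icc {s : Set (ℤ × ℤ)} {u v : ℤ × ℤ}
    (hs : IsChain (· ≤ ·) s) (hsuv : s ⊆ Icc u v) :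
    s.ncard ≤ (v.1 + v.2 + 1 - (u.1 + u.2)).toNat := by
  have hmaps : ∀ k ∈ s, k.1 + k.2 ∈ (Finset.Icc (u.1 + u.2) (v.1 + v.2) : Set ℤ) := by
    intro k hk
    have := hsuv hk
    rw [Finset.coe_Icc]
    exact ⟨add_le_add this.1.1 this.1.2, add_le_add this.2.1 this.2.2⟩
  have hinj : InjOn (fun k : ℤ × ℤ => k.1 + k.2) s := by
    intro k hk m hm hkm
    rcases hs.total hk hm with h | h <;>
    · have := h.1
      have := h.2
      ext <;> simp only at hkm <;> omega
  have hcard := ncard_le_ncard_of_injOn _ hmaps hinj (Finset.finite_toSet _)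
  rwa [ncard_coe_finset, Int.card_Icc] at hcard

end Chains

section Visits

/-- The tiles visited by a segment, as a set of indices; its cardinality is `visitCount`. -/
def visitedTiles (a b : ℝ) (p q : ℝ × ℝ) : Set (ℤ × ℤ) :=
  {kl | (segment ℝ p q ∩ tileInt a b kl.1 kl.2).Nonempty}

/-- The index of the tile containing `z`; a point on a grid line is assigned to the tile to its
right or above it. -/
noncomputable def tileAt (a b : ℝ) (z : ℝ × ℝ) : ℤ × ℤ :=
  (⌊z.1 / a⌋, ⌊z.2 / b⌋)

variable {a b : ℝ} {p q : ℝ × ℝ}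

lemma tileAt_mono (ha : 0 < a) (hb : 0 < b) : Monotone (tileAt a b) := fun _ _ hzw =>
  ⟨Int.floor_mono (div_le_div_of_nonneg_right hzw.1 ha.le),
    Int.floor_mono (div_le_div_of_nonneg_right hzw.2 hb.le)⟩

lemma tileAt_eq_of_mem_tileInt (ha : 0 < a) (hb : 0 < b) {z : ℝ × ℝ} {k l : ℤ}
    (hz : z ∈ tileInt a b k l) : tileAt a b z = (k, l) := by
  obtain ⟨⟨hk, hk'⟩, hl, hl'⟩ := hz
  simp only [tileAt, Prod.mk.injEq, Int.floor_eq_iff, le_div_iff₀ ha, div_lt_iff₀ ha,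
    le_div_iff₀ hb, div_lt_iff₀ hb]
  exact ⟨⟨hk.le, hk'⟩, hl.le, hl'⟩

lemma isChain_visitedTiles (ha : 0 < a) (hb : 0 < b) (hpq : p ≤ q) :
    IsChain (· ≤ ·) (visitedTiles a b p q) := by
  refine ((tileAt_mono ha hb).isChain_image (isChain_segment (𝕜 := ℝ) hpq)).mono ?_
  rintro ⟨k, l⟩ ⟨z, hz, hzT⟩
  exact ⟨z, hz, tileAt_eq_of_mem_tileInt ha hb hzT⟩

lemma visitedTiles_subset_Icc (ha : 0 < a) (hb : 0 < b) (hpq : p ≤ q) :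
    visitedTiles a b p q ⊆ Icc (tileAt a b p) (⌈q.1 / a⌉ - 1, ⌈q.2 / b⌉ - 1) := by
  rintro ⟨k, l⟩ ⟨z, hz, hzT⟩
  obtain ⟨hpz, hzq⟩ := segment_subset_Icc hpq hz
  refine ⟨tileAt_eq_of_mem_tileInt ha hb hzT ▸ tileAt_mono ha hb hpz, ?_⟩
  simp only [Prod.mk_le_mk, Int.le_sub_one_iff, Int.lt_ceil, lt_div_iff₀ ha, lt_div_iff₀ hb]
  exact ⟨hzT.1.1.trans_le hzq.1, hzT.2.1.trans_le hzq.2⟩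

lemma finite_visitedTiles (ha : 0 < a) (hb : 0 < b) (hpq : p ≤ q) :
    (visitedTiles a b p q).Finite :=
  (finite_Icc _ _).subset (visitedTiles_subset_Icc ha hb hpq)

lemma visitCount_comm (a b : ℝ) (p q : ℝ × ℝ) : visitCount a b p q = visitCount a b q p := by
  simp only [visitCount, segment_symm]

lemma mk_neg_mem_tileInt_iff {z : ℝ × ℝ} {k l : ℤ} :
    (z.1, -z.2) ∈ tileInt a b k l ↔ z ∈ tileInt a b k (-1 - l) := by
  simp only [tileInt, mem_prod, mem_Ioo, Int.cast_sub, Int.cast_neg, Int.cast_one]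
  constructor <;> rintro ⟨hk, hl, hl'⟩ <;> exact ⟨hk, by linarith, by linarith⟩

lemma visitCount_reflect (a b : ℝ) (p q : ℝ × ℝ) :
    visitCount a b (p.1, -p.2) (q.1, -q.2) = visitCount a b p q := by
  have hpre : visitedTiles a b (p.1, -p.2) (q.1, -q.2) =
      (fun kl : ℤ × ℤ => (kl.1, -1 - kl.2)) ⁻¹' visitedTiles a b p q := by
    ext ⟨k, l⟩
    have hreflect : ∀ t : ℝ, lineMap (p.1, -p.2) (q.1, -q.2) t =
        ((lineMap p q t).1, -(lineMap p q t).2) := by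
      intro t
      ext <;> simp only [fst_lineMap, snd_lineMap, lineMap_apply_ring']
      ring
    simp only [visitedTiles, segment_eq_image_lineMap, mem_preimage, mem_ofPred_eq,
      Set.Nonempty, mem_inter_iff, exists_mem_image, hreflect, mk_neg_mem_tileInt_iff]
  have hinv : Function.Involutive fun kl : ℤ × ℤ => (kl.1, -1 - kl.2) := fun kl => by simp
  change (visitedTiles a b _ _).ncard = (visitedTiles a b p q).ncard
  rw [hpre, ncard_preimage_of_injective_subset_range hinv.injective]
  simp [hinv.surjective.range_eq]

lemma normHeight_reflect (b : ℝ) (p q : ℝ × ℝ) :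
    normHeight b (p.1, -p.2) (q.1, -q.2) = normHeight b p q := by
  simp only [normHeight, max_neg_neg, min_neg_neg, neg_div, Int.ceil_neg, Int.floor_neg]
  ring

lemma visitCount_le_of_le (ha : 0 < a) (hb : 0 < b) (hpq : p ≤ q) :
    visitCount a b p q ≤ (normWidth a p q + normHeight b p q - 1).toNat := by
  refine (ncard_le_of_isChain_of_subset_Icc (isChain_visitedTiles ha hb hpq)
    (visitedTiles_subset_Icc ha hb hpq)).trans (Int.toNat_le_toNat ?_)
  simp only [tileAt, normWidth, normHeight, max_eq_right hpq.1, max_eq_right hpq.2,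
    min_eq_left hpq.1, min_eq_left hpq.2]
  omega

lemma visitCount_le_normWidth_add_normHeight (ha : 0 < a) (hb : 0 < b) (p q : ℝ × ℝ) :
    visitCount a b p q ≤ (normWidth a p q + normHeight b p q - 1).toNat := by
  wlog hx : p.1 ≤ q.1 generalizing p q
  · have := this q p (le_of_not_ge hx)
    rwa [visitCount_comm, normWidth, normHeight, max_comm, min_comm, max_comm q.2,
      min_comm q.2] at this
  rcases le_total p.2 q.2 with hy | hy
  · exact visitCount_le_of_le ha hb ⟨hx, hy⟩
  · rw [← visitCount_reflect, ← normHeight_reflect]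
    exact visitCount_le_of_le (p := (p.1, -p.2)) (q := (q.1, -q.2)) ha hb ⟨hx, neg_le_neg hy⟩

lemma ceil_div_sub_floor_div_lt {c : ℝ} (hc : 0 < c) (x y : ℝ) :
    ((⌈max x y / c⌉ - ⌊min x y / c⌋ - 2 : ℤ) : ℝ) * c < |x - y| := by
  have hceil := Int.ceil_lt_add_one (max x y / c)
  have hfloor := Int.lt_floor_add_one (min x y / c)
  rw [← lt_div_iff₀ hc, abs_sub_comm, ← max_sub_min_eq_abs, sub_div]
  push_cast
  linarith

end Visits

section Crossings

/-- The parameters at which the line through `p` and `q` meets a grid line. -/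
def gridCrossings (a b : ℝ) (p q : ℝ × ℝ) : Set ℝ :=
  {t | (∃ k : ℤ, (lineMap p q t).1 = k * a) ∨ ∃ l : ℤ, (lineMap p q t).2 = l * b}

/-- The times `t` at which the motion `t ↦ -u + t * X` on a line passes through the grid points
`0, c, …, n * c`. -/
noncomputable def crossingTimes (c u X : ℝ) (n : ℕ) : Finset ℝ :=
  (Finset.range (n + 1)).image fun k : ℕ => (k * c + u) / X

variable {a b : ℝ} {p q : ℝ × ℝ}

lemma eventually_lineMap_mem_Ioo_floor {c x y : ℝ} (hc : 0 < c) (hxy : x < y) (t : ℝ) :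
    ∀ᶠ s in 𝓝[>] t, lineMap x y s ∈
      Ioo (⌊lineMap x y t / c⌋ * c) ((⌊lineMap x y t / c⌋ + 1) * c) := by
  have hlt : lineMap x y t < (⌊lineMap x y t / c⌋ + 1) * c :=
    (div_lt_iff₀ hc).1 (Int.lt_floor_add_one _)
  have hev := (lineMap_continuous (R := ℝ) (p := x) (q := y)).continuousWithinAt (s := Ioi t)
    |>.eventually_lt_const hlt
  filter_upwards [hev, self_mem_nhdsWithin] with s hs hts
  exact ⟨((le_div_iff₀ hc).1 (Int.floor_le _)).trans_lt
    ((lineMap_lt_lineMap_iff_of_lt' hxy).2 hts), hs⟩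

lemma tileAt_lineMap_mem_visitedTiles (ha : 0 < a) (hb : 0 < b) (hx : p.1 < q.1) (hy : p.2 < q.2)
    {t : ℝ} (ht : t ∈ Ico 0 1) : tileAt a b (lineMap p q t) ∈ visitedTiles a b p q := by
  have hle : ∀ᶠ s in 𝓝[>] t, s ≤ 1 := nhdsWithin_le_nhds (Iic_mem_nhds ht.2)
  obtain ⟨s, hsx, hsy, hs1, hts⟩ := ((eventually_lineMap_mem_Ioo_floor ha hx t).and
    ((eventually_lineMap_mem_Ioo_floor hb hy t).and (hle.and self_mem_nhdsWithin))).exists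
  have hmem : lineMap p q s ∈ segment ℝ p q := by
    rw [segment_eq_image_lineMap]
    exact mem_image_of_mem _ ⟨ht.1.trans (le_of_lt hts), hs1⟩
  refine ⟨lineMap p q s, hmem, ?_⟩
  simp only [tileInt, tileAt, mem_prod, fst_lineMap, snd_lineMap]
  exact ⟨hsx, hsy⟩

lemma floor_div_lt_floor_div_of_lt_mul {c x : ℝ} (hc : 0 < c) {k : ℤ} (hx : x < k * c) :
    ⌊x / c⌋ < ⌊k * c / c⌋ := by
  rw [mul_div_cancel_right₀ _ hc.ne', Int.floor_intCast, Int.floor_lt, div_lt_iff₀ hc]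
  exact hx

lemma tileAt_lineMap_ne_of_mem_gridCrossings (ha : 0 < a) (hb : 0 < b) (hx : p.1 < q.1)
    (hy : p.2 < q.2) {s t : ℝ} (hst : s < t) (ht : t ∈ gridCrossings a b p q) :
    tileAt a b (lineMap p q s) ≠ tileAt a b (lineMap p q t) := by
  intro h
  rcases ht with ⟨k, hk⟩ | ⟨l, hl⟩
  · have hlt : (lineMap p q s).1 < k * a := by
      rw [← hk, fst_lineMap, fst_lineMap, lineMap_lt_lineMap_iff_of_lt' hx]
      exact hst
    have := congrArg Prod.fst h
    simp only [tileAt, hk] at this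
    exact (floor_div_lt_floor_div_of_lt_mul ha hlt).ne this
  · have hlt : (lineMap p q s).2 < l * b := by
      rw [← hl, snd_lineMap, snd_lineMap, lineMap_lt_lineMap_iff_of_lt' hy]
      exact hst
    have := congrArg Prod.snd h
    simp only [tileAt, hl] at this
    exact (floor_div_lt_floor_div_of_lt_mul hb hlt).ne this

lemma card_lt_visitCount_of_subset_gridCrossings (ha : 0 < a) (hb : 0 < b) (hx : p.1 < q.1)
    (hy : p.2 < q.2) {T : Finset ℝ} (hT01 : ↑T ⊆ Ioo (0 : ℝ) 1)
    (hT : ↑T ⊆ gridCrossings a b p q) : T.card < visitCount a b p q := by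
  have h0 : (0 : ℝ) ∉ T := fun h => (hT01 h).1.false
  have hmaps : ∀ t ∈ (insert 0 T : Finset ℝ),
      tileAt a b (lineMap p q t) ∈ visitedTiles a b p q := by
    intro t ht
    refine tileAt_lineMap_mem_visitedTiles ha hb hx hy ?_
    rcases Finset.mem_insert.1 ht with rfl | ht
    · exact ⟨le_rfl, one_pos⟩
    · exact Ioo_subset_Ico_self (hT01 ht)
  have hne : ∀ s ∈ (insert 0 T : Finset ℝ), ∀ t ∈ (insert 0 T : Finset ℝ), s < t →
      tileAt a b (lineMap p q s) ≠ tileAt a b (lineMap p q t) := by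
    intro s hs t ht hst
    have hs0 : 0 ≤ s := (Finset.mem_insert.1 hs).elim Eq.ge fun hs => (hT01 hs).1.le
    have htT : t ∈ T := Finset.mem_of_mem_insert_of_ne ht (hs0.trans_lt hst).ne'
    exact tileAt_lineMap_ne_of_mem_gridCrossings ha hb hx hy hst (hT htT)
  have hinj : InjOn (fun t => tileAt a b (lineMap p q t))
      ((insert 0 T : Finset ℝ) : Set ℝ) := by
    intro s hs t ht hst
    by_contra hne'
    rcases lt_or_gt_of_ne hne' with hlt | hlt
    · exact hne s hs t ht hlt hst
    · exact hne t ht s hs hlt hst.symm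
  have hcard := ncard_le_ncard_of_injOn _ hmaps hinj (finite_visitedTiles ha hb ⟨hx.le, hy.le⟩)
  rwa [ncard_coe_finset, Finset.card_insert_of_notMem h0] at hcard

lemma card_crossingTimes {c X : ℝ} (hc : c ≠ 0) (hX : X ≠ 0) (u : ℝ) (n : ℕ) :
    (crossingTimes c u X n).card = n + 1 := by
  rw [crossingTimes, Finset.card_image_of_injective, Finset.card_range]
  intro k l hkl
  simpa [div_left_inj' hX, hc] using hkl

lemma crossingTimes_subset_Ioo {c u X : ℝ} {n : ℕ} (hc : 0 ≤ c) (hu : u ∈ Ioo 0 (X - n * c)) :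
    ↑(crossingTimes c u X n) ⊆ Ioo (0 : ℝ) 1 := by
  intro t ht
  obtain ⟨k, hk, rfl⟩ := Finset.mem_image.1 ht
  have hkn : (k : ℝ) * c ≤ n * c := by
    gcongr
    exact Nat.lt_succ_iff.1 (Finset.mem_range.1 hk)
  have hu0 : 0 < u := hu.1
  have hpos : 0 < k * c + u := by positivity
  have hlt : k * c + u < X := by linarith [hu.2]
  exact ⟨div_pos hpos (hpos.trans hlt), (div_lt_one (hpos.trans hlt)).2 hlt⟩

lemma exists_eq_mul_of_mem_crossingTimes {c u X t : ℝ} {n : ℕ} (hX : X ≠ 0)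
    (ht : t ∈ crossingTimes c u X n) : ∃ k : ℤ, lineMap (-u) (X - u) t = k * c := by
  obtain ⟨k, -, rfl⟩ := Finset.mem_image.1 ht
  refine ⟨k, ?_⟩
  rw [lineMap_apply_ring', Int.cast_natCast]
  field_simp
  ring

lemma exists_disjoint_crossingTimes (T : Finset ℝ) (c : ℝ) {X δ : ℝ} (hX : X ≠ 0) (hδ : 0 < δ)
    (n : ℕ) : ∃ u ∈ Ioo 0 δ, Disjoint T (crossingTimes c u X n) := by
  obtain ⟨u, hu, hbad⟩ := (Ioo_infinite hδ).exists_notMem_finset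
    ((T ×ˢ Finset.range (n + 1)).image fun tk => tk.1 * X - tk.2 * c)
  refine ⟨u, hu, Finset.disjoint_left.2 fun t htT ht => hbad ?_⟩
  obtain ⟨k, hk, rfl⟩ := Finset.mem_image.1 ht
  refine Finset.mem_image.2 ⟨(_, k), Finset.mk_mem_product htT hk, ?_⟩
  rw [div_mul_cancel₀ _ hX, add_sub_cancel_left]

lemma exists_add_three_le_visitCount (ha : 0 < a) (hb : 0 < b) {i j : ℕ} {X Y : ℝ}
    (hX : i * a < X) (hY : j * b < Y) :
    ∃ u v : ℝ, i + j + 3 ≤ visitCount a b (-u, -v) (X - u, Y - v) := by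
  have hX0 : 0 < X := lt_of_le_of_lt (by positivity) hX
  have hY0 : 0 < Y := lt_of_le_of_lt (by positivity) hY
  obtain ⟨u, hu⟩ := nonempty_Ioo.2 (sub_pos.2 hX)
  obtain ⟨v, hv, hdisj⟩ :=
    exists_disjoint_crossingTimes (crossingTimes a u X i) b hY0.ne' (sub_pos.2 hY) j
  refine ⟨u, v, ?_⟩
  have hcard := card_lt_visitCount_of_subset_gridCrossings (p := (-u, -v)) (q := (X - u, Y - v))
    (T := crossingTimes a u X i ∪ crossingTimes b v Y j) ha hb (by simpa using hX0)
    (by simpa using hY0) ?_ ?_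
  · rw [Finset.card_union_of_disjoint hdisj, card_crossingTimes ha.ne' hX0.ne',
      card_crossingTimes hb.ne' hY0.ne'] at hcard
    omega
  · rw [Finset.coe_union]
    exact union_subset (crossingTimes_subset_Ioo ha.le hu) (crossingTimes_subset_Ioo hb.le hv)
  · intro t ht
    rw [gridCrossings, mem_ofPred_eq, fst_lineMap, snd_lineMap]
    exact (Finset.mem_union.1 ht).imp (exists_eq_mul_of_mem_crossingTimes hX0.ne')
      (exists_eq_mul_of_mem_crossingTimes hY0.ne')

end Crossings

section CriticalLengths

/-- The length of the diagonal of a rectangle made of `i` by `j` tiles. -/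
noncomputable def boxDiag (a b : ℝ) (i j : ℕ) : ℝ :=
  √((i * a) ^ 2 + (j * b) ^ 2)

/-- The shortest diagonal of a rectangle of `i` by `j` tiles with `i + j = n`. It equals
`infLen a b (n + 3)`, see `infLen_add_three`. -/
noncomputable def minBoxDiag (a b : ℝ) (n : ℕ) : ℝ :=
  (Finset.HasAntidiagonal.antidiagonal n).inf' (Finset.card_pos.1 (by simp)) fun ij =>
    boxDiag a b ij.1 ij.2

variable {a b : ℝ}

lemma sq_natCast_mul_lt_sq {c d : ℝ} {m : ℤ} {i : ℕ} (hc : 0 ≤ c) (hi : i ≤ m)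
    (hm : m * c < |d|) : (i * c) ^ 2 < d ^ 2 := by
  have him : (i : ℝ) ≤ m := mod_cast hi
  rw [sq_lt_sq, abs_of_nonneg (by positivity)]
  exact (mul_le_mul_of_nonneg_right him hc).trans_lt hm

lemma exists_boxDiag_lt_segLen (ha : 0 < a) (hb : 0 < b) {p q : ℝ × ℝ} {n : ℕ}
    (hn : n + 3 ≤ visitCount a b p q) : ∃ i j, i + j = n ∧ boxDiag a b i j < segLen p q := by
  have hbox := hn.trans (visitCount_le_normWidth_add_normHeight ha hb p q)
  have hw : ((normWidth a p q - 2 : ℤ) : ℝ) * a < |p.1 - q.1| := ceil_div_sub_floor_div_lt ha _ _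
  have hh : ((normHeight b p q - 2 : ℤ) : ℝ) * b < |p.2 - q.2| := ceil_div_sub_floor_div_lt hb _ _
  generalize normWidth a p q = w at hbox hw
  generalize normHeight b p q = h at hbox hh
  rcases lt_or_ge w 2 with hw2 | hw2
  · have hy := sq_natCast_mul_lt_sq (i := n) hb.le (by omega) hh
    refine ⟨0, n, zero_add n, Real.sqrt_lt_sqrt (by positivity) ?_⟩
    simpa using add_lt_add_of_le_of_lt (sq_nonneg (p.1 - q.1)) hy
  rcases lt_or_ge (w - 2) n with hwn | hwn
  · obtain ⟨i, hi⟩ := Int.eq_ofNat_of_zero_le (sub_nonneg.2 hw2)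
    have hx := sq_natCast_mul_lt_sq (i := i) ha.le (by omega) hw
    have hy := sq_natCast_mul_lt_sq (i := n - i) hb.le (by omega) hh
    exact ⟨i, n - i, by omega, Real.sqrt_lt_sqrt (by positivity) (add_lt_add hx hy)⟩
  · have hx := sq_natCast_mul_lt_sq (i := n) ha.le (by omega) hw
    refine ⟨n, 0, add_zero n, Real.sqrt_lt_sqrt (by positivity) ?_⟩
    simpa using add_lt_add_of_lt_of_le hx (sq_nonneg (p.2 - q.2))

lemma exists_lt_lt_sqrt_sq_add_sq_eq {x y ℓ : ℝ}
    (h : √(x ^ 2 + y ^ 2) < ℓ) : ∃ X Y, x < X ∧ y < Y ∧ √(X ^ 2 + Y ^ 2) = ℓ := by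
  have hℓ : 0 < ℓ := (Real.sqrt_nonneg _).trans_lt h
  rw [Real.sqrt_lt' hℓ] at h
  set d := (ℓ ^ 2 - (x ^ 2 + y ^ 2)) / 2 with hd
  have hd0 : 0 < d := half_pos (sub_pos.2 h)
  refine ⟨√(x ^ 2 + d), √(y ^ 2 + d), Real.lt_sqrt_of_sq_lt (by linarith),
    Real.lt_sqrt_of_sq_lt (by linarith), ?_⟩
  rw [Real.sq_sqrt (by positivity), Real.sq_sqrt (by positivity),
    show x ^ 2 + d + (y ^ 2 + d) = ℓ ^ 2 by rw [hd]; ring, Real.sqrt_sq hℓ.le]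

lemma exists_segLen_eq_of_boxDiag_lt (ha : 0 < a) (hb : 0 < b) {i j : ℕ} {ℓ : ℝ}
    (hℓ : boxDiag a b i j < ℓ) :
    ∃ p q, segLen p q = ℓ ∧ i + j + 3 ≤ visitCount a b p q := by
  obtain ⟨X, Y, hX, hY, hXY⟩ := exists_lt_lt_sqrt_sq_add_sq_eq hℓ
  obtain ⟨u, v, huv⟩ := exists_add_three_le_visitCount ha hb hX hY
  refine ⟨_, _, ?_, huv⟩
  rw [← hXY, segLen]
  ring_nf

lemma minBoxDiag_lt_iff {n : ℕ} {ℓ : ℝ} :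
    minBoxDiag a b n < ℓ ↔ ∃ i j, i + j = n ∧ boxDiag a b i j < ℓ := by
  simp only [minBoxDiag, Finset.inf'_lt_iff, Prod.exists, Finset.HasAntidiagonal.mem_antidiagonal]

lemma exists_segLen_eq_and_add_three_le_visitCount_iff (ha : 0 < a) (hb : 0 < b) {n : ℕ} {ℓ : ℝ} :
    (∃ p q, segLen p q = ℓ ∧ n + 3 ≤ visitCount a b p q) ↔ minBoxDiag a b n < ℓ := by
  rw [minBoxDiag_lt_iff]
  constructor
  · rintro ⟨p, q, rfl, hn⟩
    exact exists_boxDiag_lt_segLen ha hb hn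
  · rintro ⟨i, j, rfl, hij⟩
    exact exists_segLen_eq_of_boxDiag_lt ha hb hij

lemma minBoxDiag_nonneg (a b : ℝ) (n : ℕ) : 0 ≤ minBoxDiag a b n :=
  Finset.le_inf' _ _ fun _ _ => Real.sqrt_nonneg _

lemma minBoxDiag_zero (a b : ℝ) : minBoxDiag a b 0 = 0 := by
  simp [minBoxDiag, boxDiag]

lemma boxDiag_lt_succ_left (ha : 0 < a) (i j : ℕ) : boxDiag a b i j < boxDiag a b (i + 1) j := by
  refine Real.sqrt_lt_sqrt (by positivity) ?_
  gcongr
  exact i.lt_succ_self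

lemma boxDiag_lt_succ_right (hb : 0 < b) (i j : ℕ) : boxDiag a b i j < boxDiag a b i (j + 1) := by
  refine Real.sqrt_lt_sqrt (by positivity) ?_
  gcongr
  exact j.lt_succ_self

lemma strictMono_minBoxDiag (ha : 0 < a) (hb : 0 < b) : StrictMono (minBoxDiag a b) := by
  refine strictMono_nat_of_lt_succ fun n => (Finset.lt_inf'_iff _).2 ?_
  rintro ⟨i, j⟩ hij
  rw [Finset.HasAntidiagonal.mem_antidiagonal] at hij
  rw [minBoxDiag_lt_iff]
  rcases i with _ | i
  · obtain rfl : j = n + 1 := by omega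
    exact ⟨0, n, zero_add n, boxDiag_lt_succ_right hb 0 n⟩
  · exact ⟨i, j, by omega, boxDiag_lt_succ_left ha i j⟩

lemma infLen_add_three (ha : 0 < a) (hb : 0 < b) (n : ℕ) :
    infLen a b (n + 3) = minBoxDiag a b n := by
  simp only [infLen, exists_segLen_eq_and_add_three_le_visitCount_iff ha hb]
  have : {ℓ | 0 < ℓ ∧ minBoxDiag a b n < ℓ} = Ioi (minBoxDiag a b n) := by
    ext ℓ
    exact and_iff_right_of_imp (minBoxDiag_nonneg a b n).trans_lt
  rw [this, csInf_Ioi]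

lemma visitCount_le_floor_segLen (ha : 0 < a) (hb : 0 < b) (p q : ℝ × ℝ) :
    visitCount a b p q ≤ ⌊segLen p q / a + segLen p q / b⌋₊ + 3 := by
  rcases lt_or_ge (visitCount a b p q) 3 with h | h
  · omega
  obtain ⟨n, hn⟩ := Nat.exists_eq_add_of_le' h
  obtain ⟨i, j, rfl, hij⟩ := exists_boxDiag_lt_segLen ha hb hn.ge
  have hi : i * a ≤ boxDiag a b i j := Real.le_sqrt_of_sq_le (by nlinarith)
  have hj : j * b ≤ boxDiag a b i j := Real.le_sqrt_of_sq_le (by nlinarith)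
  rw [hn]
  gcongr
  refine Nat.le_floor ?_
  push_cast
  gcongr
  · exact (le_div_iff₀ ha).2 (hi.trans hij.le)
  · exact (le_div_iff₀ hb).2 (hj.trans hij.le)

lemma add_three_le_maxTiles_iff (ha : 0 < a) (hb : 0 < b) {n : ℕ} {ℓ : ℝ} :
    n + 3 ≤ maxTiles a b ℓ ↔ minBoxDiag a b n < ℓ := by
  rw [← exists_segLen_eq_and_add_three_le_visitCount_iff ha hb]
  constructor
  · intro h
    obtain ⟨_, ⟨p, q, hpq, rfl⟩, hn⟩ := exists_lt_of_lt_csSup' (Nat.lt_of_succ_le h)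
    exact ⟨p, q, hpq, hn⟩
  · rintro ⟨p, q, hpq, hn⟩
    refine hn.trans (le_csSup ⟨⌊ℓ / a + ℓ / b⌋₊ + 3, ?_⟩ ⟨p, q, hpq, rfl⟩)
    rintro _ ⟨p, q, rfl, rfl⟩
    exact visitCount_le_floor_segLen ha hb p q

lemma maxTiles_eq_add_three_iff (ha : 0 < a) (hb : 0 < b) {n : ℕ} {ℓ : ℝ} :
    maxTiles a b ℓ = n + 3 ↔ ℓ ∈ Ioc (minBoxDiag a b n) (minBoxDiag a b (n + 1)) := by
  rw [mem_Ioc, ← not_lt, ← add_three_le_maxTiles_iff ha hb, ← add_three_le_maxTiles_iff ha hb]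
  omega

lemma exists_eq_minBoxDiag_of_not_continuousAt (ha : 0 < a) (hb : 0 < b) {ℓ : ℝ} (hℓ : 0 < ℓ)
    (hdisc : ¬ContinuousAt (fun x : ℝ => (maxTiles a b x : ℝ)) ℓ) :
    ∃ n, ℓ = minBoxDiag a b (n + 1) := by
  have h3 : 0 + 3 ≤ maxTiles a b ℓ := by
    rwa [add_three_le_maxTiles_iff ha hb, minBoxDiag_zero]
  obtain ⟨n, hn⟩ := Nat.exists_eq_add_of_le' h3
  obtain ⟨hlt, hle⟩ := (maxTiles_eq_add_three_iff ha hb).1 hn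
  refine ⟨n, hle.eq_of_not_lt fun hlt' => hdisc ?_⟩
  have hconst : (fun x => (maxTiles a b x : ℝ)) =ᶠ[𝓝 ℓ] fun _ => ((n + 3 : ℕ) : ℝ) := by
    filter_upwards [Ioo_mem_nhds hlt hlt'] with x hx
    rw [(maxTiles_eq_add_three_iff ha hb).2 (Ioo_subset_Ioc_self hx)]
  exact continuousAt_const.congr hconst.symm

end CriticalLengths

theorem stmt_8_general (a b : ℝ) (ha : 0 < a) (hb : 0 < b) (N : ℕ) (hN : 4 ≤ N) :
    maxTiles a b (infLen a b N) = N - 1 ∧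
    (∃ ε > (0 : ℝ), ∀ ℓ : ℝ, infLen a b N < ℓ → ℓ ≤ infLen a b N + ε →
      maxTiles a b ℓ = N) ∧
    (∀ ℓ : ℝ, 0 < ℓ → ¬ContinuousAt (fun x : ℝ => (maxTiles a b x : ℝ)) ℓ →
      ∃ N' : ℕ, 4 ≤ N' ∧ ℓ = infLen a b N') := by
  obtain ⟨n, rfl⟩ : ∃ n, N = n + 1 + 3 := ⟨N - 4, by omega⟩
  have hmono := strictMono_minBoxDiag ha hb
  rw [infLen_add_three ha hb]
  refine ⟨?_, ⟨minBoxDiag a b (n + 2) - minBoxDiag a b (n + 1), ?_, ?_⟩, ?_⟩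
  · exact (maxTiles_eq_add_three_iff ha hb).2 ⟨hmono n.lt_succ_self, le_rfl⟩
  · exact sub_pos.2 (hmono (n + 1).lt_succ_self)
  · intro ℓ hlt hle
    exact (maxTiles_eq_add_three_iff ha hb).2 ⟨hlt, by rwa [add_sub_cancel] at hle⟩
  · intro ℓ hℓ hdisc
    obtain ⟨m, hm⟩ := exists_eq_minBoxDiag_of_not_continuousAt ha hb hℓ hdisc
    exact ⟨m + 1 + 3, by omega, by rw [hm, infLen_add_three ha hb]⟩

theorem stmt_8 (a b : ℝ) (hb : 0 < b) (hab : b ≤ a) (N : ℕ) (hN : 4 ≤ N) :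
    maxTiles a b (infLen a b N) = N - 1 ∧
    (∃ ε > (0 : ℝ), ∀ ℓ : ℝ, infLen a b N < ℓ → ℓ ≤ infLen a b N + ε →
      maxTiles a b ℓ = N) ∧
    (∀ ℓ : ℝ, 0 < ℓ → ¬ContinuousAt (fun x : ℝ => (maxTiles a b x : ℝ)) ℓ →
      ∃ N' : ℕ, 4 ≤ N' ∧ ℓ = infLen a b N') :=
  stmt_8_general a b (hb.trans_le hab) hb N hN
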